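/- arXiv:2212.08721 — 7 statements merged into one kernel-verified Lean document; each statement's English description precedes it below -/
import Mathlib

section
/- Let 𝒞 be a weak hierarchy on a finite nonempty set V satisfying axiom (I). Then 𝒞 satisfies axiom (WP). -/
namespace TransitPaper

variable {V : Type*}

/-- Transit function axioms (t1), (t2), (t3). -/
def IsTransit (R : V → V → Set V) : Prop :=
  (∀ u v, u ∈ R u v) ∧ (∀ u v, R u v = R v u) ∧ (∀ u : V, R u u = {u})

/-- Monotonicity axiom (m). -/
def IsMonotone (R : V → V → Set V) : Prop :=
  ∀ u v p q, p ∈ R u v → q ∈ R u v → R p q ⊆ R u v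

/-- Two sets overlap: A ∩ B, A \ B, B \ A all nonempty. -/
def Ovl (A B : Set V) : Prop :=
  (A ∩ B).Nonempty ∧ (A \ B).Nonempty ∧ (B \ A).Nonempty

/-- The system of transit sets 𝒞_R. -/
def transitSets (R : V → V → Set V) : Set (Set V) :=
  {S | ∃ x y, S = R x y}

/-- S is an interval with respect to the order `lt`. -/
def IsIntervalWrt (lt : V → V → Prop) (S : Set V) : Prop :=
  ∀ x ∈ S, ∀ y ∈ S, ∀ w, lt x w → lt w y → w ∈ S

/-- R is pyramidal: monotone and there is a total order making all transit sets intervals. -/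
def IsPyramidal (R : V → V → Set V) : Prop :=
  IsMonotone R ∧ ∃ lt : V → V → Prop, IsStrictTotalOrder V lt ∧
    ∀ u v, IsIntervalWrt lt (R u v)

def AxUC (R : V → V → Set V) : Prop :=
  ∀ x y u v : V, (R x y ∩ R u v).Nonempty →
    ∃ p ∈ R x y ∪ R u v, ∃ q ∈ R x y ∪ R u v, R x y ∪ R u v = R p q

def AxU (R : V → V → Set V) : Prop :=
  ∀ u v z : V, z ∈ R u v → R u v = R u z ∪ R z v

def AxW (R : V → V → Set V) : Prop :=
  ∀ x y z : V, z ∈ R x y ∨ y ∈ R x z ∨ x ∈ R y z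

def AxWP (R : V → V → Set V) : Prop :=
  ∀ u v x y p q : V, (R u v ∩ R x y).Nonempty → (R u v ∩ R p q).Nonempty →
    (R x y ∩ R p q).Nonempty →
    R p q ⊆ R u v ∪ R x y ∨ R u v ⊆ R p q ∪ R x y ∨ R x y ⊆ R p q ∪ R u v

def AxI (R : V → V → Set V) : Prop :=
  ∀ x y u v p q : V, (R x y ∩ R u v).Nonempty → R x y ∩ R u v ⊆ R p q →
    (R p q \ (R x y ∪ R u v)).Nonempty → R x y ⊆ R p q ∨ R u v ⊆ R p q

def AxO' (R : V → V → Set V) : Prop :=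
  ∀ u v : V, ∀ z ∈ R u v, ∃ p ∈ R u v, ∃ q ∈ R u v, R p z ∪ R z q = R u v

def AxL1 (R : V → V → Set V) : Prop :=
  ∀ x y p q u v : V, Ovl (R x y) (R p q) → Ovl (R p q) (R u v) →
    R x y ⊆ R u v ∨ R u v ⊆ R x y ∨
      (R x y ∩ R u v ⊆ R p q ∧ R p q ⊆ R x y ∪ R u v)

def AxL2 (R : V → V → Set V) : Prop :=
  ∀ x y p q u v : V, Ovl (R x y) (R p q) → Ovl (R p q) (R u v) →
    R x y ∩ R u v = ∅ →
    ∃ s ∈ R x y \ R p q, ∃ t ∈ R u v \ R p q,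
      R x y ∪ R p q ∪ R u v = R s t

def AxN3O (R : V → V → Set V) : Prop :=
  ∀ x y p q u v : V, Ovl (R x y) (R p q) → Ovl (R p q) (R u v) →
    R x y ⊆ R u v ∨ R u v ⊆ R x y ∨ R x y ∩ R u v = ∅

def AxU3 (R : V → V → Set V) : Prop :=
  ∀ x y : V, ¬ R x y ⊆ {x, y} →
    ∃ z ∈ R x y, z ≠ x ∧ z ≠ y ∧ R x z ∪ R z y = R x y

def AxB3 (R : V → V → Set V) : Prop :=
  ∀ u v x y : V, x ∈ R u v → y ∈ R u x → x ∈ R y v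

def AxB4 (R : V → V → Set V) : Prop :=
  ∀ u v x : V, x ∈ R u v → R u x ∩ R x v = {x}

def AxTB (R : V → V → Set V) : Prop :=
  ∀ W : Finset V, 3 ≤ W.card →
    ∃ x ∈ W, ∀ u ∈ W, ∀ v ∈ W, R x u ⊆ R x v ∨ R x v ⊆ R x u

def AxHC (R : V → V → Set V) : Prop :=
  ∀ W : Finset V, 3 ≤ W.card →
    ∃ x ∈ W, ∃ y ∈ W, x ≠ y ∧
      ∀ u ∈ W, ∀ v ∈ W,
        (R x u ⊆ R x v ∨ R x v ⊆ R x u) ∧ (R y u ⊆ R y v ∨ R y v ⊆ R y u)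

def AxTB' (R : V → V → Set V) : Prop :=
  ∀ n : ℕ, 3 ≤ n → ∀ v : ZMod n → V,
    (∀ k : ZMod n, v (k - 1) ∉ R (v k) (v (k + 1)) ∧
      v (k + 1) ∉ R (v (k - 1)) (v k)) →
    ∃ j i : ZMod n, i ≠ j ∧ i ≠ j - 1 ∧ v j ∈ R (v i) (v (i + 1))

def AxP2 (R : V → V → Set V) : Prop :=
  ∀ x y u v p q s t : V,
    Ovl (R x y) (R s t) → Ovl (R u v) (R s t) → Ovl (R p q) (R s t) →
    R x y ⊆ R u v ∪ R p q ∪ R s t ∨ R u v ⊆ R x y ∪ R p q ∪ R s t ∨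
      R p q ⊆ R x y ∪ R u v ∪ R s t

def AxP3 (R : V → V → Set V) : Prop :=
  ∀ x y u v p q s t : V,
    Ovl (R x y) (R u v) → Ovl (R x y) (R p q) → Ovl (R x y) (R s t) →
    R p q ⊆ R u v → R s t ⊆ R u v → (R p q ∩ R s t).Nonempty

def AxP4 (R : V → V → Set V) : Prop :=
  ∀ n : ℕ, 3 ≤ n → ∀ (u v y : V) (x : ℕ → V),
    (∀ i j : ℕ, 1 ≤ i → i ≤ n → 1 ≤ j → j + 1 ≤ n → j ≠ i - 1 → j ≠ i →
      x i ∉ R (x j) (x (j + 1))) →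
    (R u v ∩ R (x 1) (x 2)).Nonempty →
    (R u v ∩ R (x (n - 1)) (x n)).Nonempty →
    (∀ i : ℕ, 1 ≤ i → i + 1 ≤ n → y ∈ R u v \ R (x i) (x (i + 1))) →
    R (x 1) (x 2) ⊆ R u v ∨ R (x (n - 1)) (x n) ⊆ R u v

/-- A weak β-cycle in a set system 𝒞. -/
def HasWeakBetaCycle (𝒞 : Set (Set V)) : Prop :=
  ∃ n : ℕ, 3 ≤ n ∧ ∃ (C : ZMod n → Set V) (x : ZMod n → V),
    (∀ i, C i ∈ 𝒞) ∧ (∀ i, x i ∈ C i ∧ x i ∈ C (i + 1)) ∧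
    (∀ i k : ZMod n, k ≠ i → k ≠ i + 1 → x i ∉ C k)

def TotallyBalanced (𝒞 : Set (Set V)) : Prop := ¬ HasWeakBetaCycle 𝒞

/-- A pure cycle: a weak β-cycle with nonconsecutive sets disjoint. -/
def HasPureCycle (𝒞 : Set (Set V)) : Prop :=
  ∃ n : ℕ, 3 ≤ n ∧ ∃ (C : ZMod n → Set V) (x : ZMod n → V),
    (∀ i, C i ∈ 𝒞) ∧ (∀ i, x i ∈ C i ∧ x i ∈ C (i + 1)) ∧
    (∀ i k : ZMod n, k ≠ i → k ≠ i + 1 → x i ∉ C k) ∧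
    (∀ i j : ZMod n, j ≠ i - 1 → j ≠ i → j ≠ i + 1 → C i ∩ C j = ∅)

def HasGammaTriangle (𝒞 : Set (Set V)) : Prop :=
  ∃ C₁ C₂ C₃ : Set V, C₁ ∈ 𝒞 ∧ C₂ ∈ 𝒞 ∧ C₃ ∈ 𝒞 ∧
    (C₁ ∩ C₂).Nonempty ∧ (C₁ ∩ C₃).Nonempty ∧ (C₂ ∩ C₃).Nonempty ∧
    ∃ u ∈ C₃, ∃ w ∈ C₃, u ∈ C₁ \ C₂ ∧ w ∈ C₂ \ C₁

def GammaAcyclic (𝒞 : Set (Set V)) : Prop :=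
  ¬ HasPureCycle 𝒞 ∧ ¬ HasGammaTriangle 𝒞

def IsHierarchy (𝒞 : Set (Set V)) : Prop :=
  Set.univ ∈ 𝒞 ∧ (∀ x : V, {x} ∈ 𝒞) ∧
    ∀ A ∈ 𝒞, ∀ B ∈ 𝒞, A ∩ B = A ∨ A ∩ B = B ∨ A ∩ B = ∅

def WeakHierarchy (𝒞 : Set (Set V)) : Prop :=
  ∀ A ∈ 𝒞, ∀ B ∈ 𝒞, ∀ C ∈ 𝒞,
    A ∩ B ∩ C = A ∩ B ∨ A ∩ B ∩ C = A ∩ C ∨ A ∩ B ∩ C = B ∩ C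

def AxWPSet (𝒞 : Set (Set V)) : Prop :=
  ∀ A ∈ 𝒞, ∀ B ∈ 𝒞, ∀ C ∈ 𝒞,
    (A ∩ B).Nonempty → (A ∩ C).Nonempty → (B ∩ C).Nonempty →
    A ⊆ B ∪ C ∨ B ⊆ A ∪ C ∨ C ⊆ A ∪ B

def AxISet (𝒞 : Set (Set V)) : Prop :=
  ∀ A ∈ 𝒞, ∀ B ∈ 𝒞, ∀ C ∈ 𝒞,
    (A ∩ B).Nonempty → A ∩ B ⊆ C → (C \ (A ∪ B)).Nonempty →
    A ⊆ C ∨ B ⊆ C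

def AxL1Set (𝒞 : Set (Set V)) : Prop :=
  ∀ A ∈ 𝒞, ∀ B ∈ 𝒞, ∀ C ∈ 𝒞, Ovl A B → Ovl B C →
    A ⊆ C ∨ C ⊆ A ∨ (A ∩ C ⊆ B ∧ B ⊆ A ∪ C)

def AxN3OSet (𝒞 : Set (Set V)) : Prop :=
  ∀ A ∈ 𝒞, ∀ B ∈ 𝒞, ∀ C ∈ 𝒞, Ovl A B → Ovl B C → ¬ Ovl A C

def AxL2'Set (𝒞 : Set (Set V)) : Prop :=
  ∀ A ∈ 𝒞, ∀ B ∈ 𝒞, ∀ C ∈ 𝒞, Ovl A B → Ovl B C → A ∩ C = ∅ →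
    A ∪ B ∪ C ∈ 𝒞

def AxL2''Set (𝒞 : Set (Set V)) : Prop :=
  ∀ A ∈ 𝒞, ∀ B ∈ 𝒞, ∀ C ∈ 𝒞, ∀ D ∈ 𝒞, Ovl A B → Ovl B C → A ∩ C = ∅ →
    (A ∪ C) \ B ⊆ D → A ∪ B ∪ C ⊆ D

/-! In a weak hierarchy, two of any three sets meet inside the third. If they do not cover the
third, then (I) puts one of the two inside it. -/

theorem weakHierarchy_iff_inter_subset {𝒞 : Set (Set V)} :
    WeakHierarchy 𝒞 ↔
      ∀ A ∈ 𝒞, ∀ B ∈ 𝒞, ∀ C ∈ 𝒞, A ∩ B ⊆ C ∨ A ∩ C ⊆ B ∨ B ∩ C ⊆ A := by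
  refine forall₂_congr fun A _ ↦ forall₂_congr fun B _ ↦ forall₂_congr fun C _ ↦ ?_
  rw [Set.inter_eq_left, Set.inter_right_comm A B C, Set.inter_eq_left,
    Set.inter_right_comm A C B, Set.inter_assoc, Set.inter_eq_right]

theorem AxISet.subset_union_of_inter_subset {𝒞 : Set (Set V)} (hI : AxISet 𝒞)
    {A B C : Set V} (hA : A ∈ 𝒞) (hB : B ∈ 𝒞) (hC : C ∈ 𝒞)
    (hAB : (A ∩ B).Nonempty) (hABC : A ∩ B ⊆ C) :
    A ⊆ B ∪ C ∨ B ⊆ A ∪ C ∨ C ⊆ A ∪ B := by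
  by_cases hcover : C ⊆ A ∪ B
  · exact .inr (.inr hcover)
  · rcases hI A hA B hB C hC hAB hABC (Set.sdiff_nonempty.mpr hcover) with hAC | hBC
    · exact .inl (Set.subset_union_of_subset_right hAC B)
    · exact .inr (.inl (Set.subset_union_of_subset_right hBC A))

theorem stmt_10_general {𝒞 : Set (Set V)} (hwh : WeakHierarchy 𝒞) (hI : AxISet 𝒞) :
    AxWPSet 𝒞 := by
  intro A hA B hB C hC hAB hAC hBC
  rcases weakHierarchy_iff_inter_subset.mp hwh A hA B hB C hC with hABC | hACB | hBCA
  · exact hI.subset_union_of_inter_subset hA hB hC hAB hABC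
  · simpa only [Set.union_comm, or_comm] using
      hI.subset_union_of_inter_subset hA hC hB hAC hACB
  · rw [or_rotate]
    simpa only [Set.union_comm] using
      hI.subset_union_of_inter_subset hB hC hA hBC hBCA

/-- A weak hierarchy satisfying (I) satisfies (WP). -/
theorem stmt_10 {V : Type*} [Fintype V] [Nonempty V] (𝒞 : Set (Set V))
    (hne : ∀ C ∈ 𝒞, C.Nonempty) (hwh : WeakHierarchy 𝒞) (hI : AxISet 𝒞) :
    AxWPSet 𝒞 :=
  stmt_10_general hwh hI

end TransitPaper
end

section
/- Let 𝒞 be a set system on a finite nonempty set V satisfying axiom (L1). Then 𝒞 satisfies axiom (WP). -/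
namespace TransitPaper

variable {V : Type*}

theorem ovl_iff_not_subset {A B : Set V} :
    Ovl A B ↔ (A ∩ B).Nonempty ∧ ¬A ⊆ B ∧ ¬B ⊆ A := by
  simp only [Ovl, Set.sdiff_nonempty]

theorem stmt_11_general {𝒞 : Set (Set V)} (hl1 : AxL1Set 𝒞) {A B C : Set V}
    (hA : A ∈ 𝒞) (hB : B ∈ 𝒞) (hC : C ∈ 𝒞)
    (hAB : (A ∩ B).Nonempty) (hBC : (B ∩ C).Nonempty) :
    A ⊆ B ∪ C ∨ B ⊆ A ∪ C ∨ C ⊆ A ∪ B := by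
  by_contra! ⟨hA_union, hB_union, hC_union⟩
  have ovl_AB : Ovl A B := ovl_iff_not_subset.2
    ⟨hAB, fun h ↦ hA_union (Set.subset_union_of_subset_left h C),
      fun h ↦ hB_union (Set.subset_union_of_subset_left h C)⟩
  have ovl_BC : Ovl B C := ovl_iff_not_subset.2
    ⟨hBC, fun h ↦ hB_union (Set.subset_union_of_subset_right h A),
      fun h ↦ hC_union (Set.subset_union_of_subset_right h A)⟩
  rcases hl1 A hA B hB C hC ovl_AB ovl_BC with hAC | hCA | ⟨-, hB_sub⟩
  · exact hA_union (Set.subset_union_of_subset_right hAC B)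
  · exact hC_union (Set.subset_union_of_subset_left hCA B)
  · exact hB_union hB_sub

/-- A set system satisfying (L1) satisfies (WP). -/
theorem stmt_11 {V : Type*} [Fintype V] [Nonempty V] (𝒞 : Set (Set V))
    (hne : ∀ C ∈ 𝒞, C.Nonempty) (hl1 : AxL1Set 𝒞) :
    AxWPSet 𝒞 := by
  intro A hA B hB C hC hAB _ hBC
  exact stmt_11_general hl1 hA hB hC hAB hBC

end TransitPaper
end

section
/- Let 𝒞 be a set system on a finite nonempty set V. If 𝒞 satisfies axiom (L1), then 𝒞 satisfies axiom (N3O). -/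
namespace TransitPaper

variable {V : Type*}

section Overlap

variable {A B C : Set V} {𝒞 : Set (Set V)}

theorem Ovl.symm (h : Ovl A B) : Ovl B A :=
  ⟨Set.inter_comm A B ▸ h.1, h.2.symm⟩

theorem Ovl.not_subset (h : Ovl A B) : ¬ A ⊆ B :=
  Set.sdiff_nonempty.mp h.2.1

theorem AxL1Set.inter_subset_and_subset_union (hL1 : AxL1Set 𝒞) (hA : A ∈ 𝒞) (hB : B ∈ 𝒞)
    (hC : C ∈ 𝒞) (hAB : Ovl A B) (hBC : Ovl B C) (hAC : Ovl A C) : A ∩ C ⊆ B ∧ B ⊆ A ∪ C :=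
  ((hL1 A hA B hB C hC hAB hBC).resolve_left hAC.not_subset).resolve_left hAC.symm.not_subset

end Overlap

theorem stmt_13_general {V : Type*} {𝒞 : Set (Set V)} (hL1 : AxL1Set 𝒞) : AxN3OSet 𝒞 := by
  intro A hA B hB C hC hAB hBC hAC
  -- Among pairwise overlapping sets any of the three can play the middle role in (L1).
  have hAC_sub_B : A ∩ C ⊆ B :=
    (hL1.inter_subset_and_subset_union hA hB hC hAB hBC hAC).1
  have hA_sub_BC : A ⊆ B ∪ C :=
    (hL1.inter_subset_and_subset_union hB hA hC hAB.symm hAC hBC).2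
  have hA_sub_B : A ⊆ B :=
    calc
      A = A ∩ (B ∪ C) := (Set.inter_eq_left.mpr hA_sub_BC).symm
      _ = A ∩ B ∪ A ∩ C := Set.inter_union_distrib_left A B C
      _ ⊆ B := Set.union_subset Set.inter_subset_right hAC_sub_B
  exact hAB.not_subset hA_sub_B

/-- A set system satisfying (L1) satisfies (N3O). -/
theorem stmt_13 {V : Type*} [Fintype V] [Nonempty V] (𝒞 : Set (Set V))
    (hne : ∀ C ∈ 𝒞, C.Nonempty) (hl1 : AxL1Set 𝒞) :
    AxN3OSet 𝒞 :=
  stmt_13_general hl1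

end TransitPaper
end

section
/- Let R be a monotone transit function on a finite nonempty set V satisfying axioms (w) and (l2). Then the system of transit sets 𝒞_R is a weak hierarchy satisfying axioms (L2') and (L2''). -/
/-!
A violation of the weak hierarchy condition by `A`, `B`, `C` gives points `a ∈ (A ∩ B) \ C`,
`b ∈ (A ∩ C) \ B` and `c ∈ (B ∩ C) \ A`. Axiom (w) puts one of them into the transit set of the
other two, which by monotonicity lies in the set that this point avoids. For (L2''), the endpoints
`s ∈ A \ B` and `t ∈ C \ B` given by (l2) lie in `D`, so `A ∪ B ∪ C = R s t ⊆ D` by monotonicity.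
-/

namespace TransitPaper

variable {V : Type*}

section

variable {R : V → V → Set V}

theorem IsMonotone.subset_of_mem (hm : IsMonotone R) {D : Set V} (hD : D ∈ transitSets R)
    {p q : V} (hp : p ∈ D) (hq : q ∈ D) : R p q ⊆ D := by
  obtain ⟨u, v, rfl⟩ := hD
  exact hm u v p q hp hq

theorem AxL2.exists_union_eq (hl2 : AxL2 R) {A B C : Set V} (hA : A ∈ transitSets R)
    (hB : B ∈ transitSets R) (hC : C ∈ transitSets R) (hAB : Ovl A B) (hBC : Ovl B C)
    (hAC : A ∩ C = ∅) : ∃ s ∈ A \ B, ∃ t ∈ C \ B, A ∪ B ∪ C = R s t := by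
  obtain ⟨x, y, rfl⟩ := hA
  obtain ⟨p, q, rfl⟩ := hB
  obtain ⟨u, v, rfl⟩ := hC
  exact hl2 x y p q u v hAB hBC hAC

theorem weakHierarchy_transitSets (hm : IsMonotone R) (hw : AxW R) :
    WeakHierarchy (transitSets R) := by
  refine weakHierarchy_iff_inter_subset.2 fun A hA B hB C hC => ?_
  by_contra! h
  obtain ⟨⟨a, ⟨haA, haB⟩, haC⟩, ⟨b, ⟨hbA, hbC⟩, hbB⟩, ⟨c, ⟨hcB, hcC⟩, hcA⟩⟩ :=
    h.imp Set.not_subset.1 (And.imp Set.not_subset.1 Set.not_subset.1)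
  rcases hw a b c with hc | hb | ha
  · exact hcA (hm.subset_of_mem hA haA hbA hc)
  · exact hbB (hm.subset_of_mem hB haB hcB hb)
  · exact haC (hm.subset_of_mem hC hbC hcC ha)

theorem axL2'Set_transitSets (hl2 : AxL2 R) : AxL2'Set (transitSets R) := by
  intro A hA B hB C hC hAB hBC hAC
  obtain ⟨s, -, t, -, hst⟩ := hl2.exists_union_eq hA hB hC hAB hBC hAC
  exact ⟨s, t, hst⟩

theorem axL2''Set_transitSets (hm : IsMonotone R) (hl2 : AxL2 R) :
    AxL2''Set (transitSets R) := by
  intro A hA B hB C hC D hD hAB hBC hAC hACD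
  obtain ⟨s, ⟨hsA, hsB⟩, t, ⟨htC, htB⟩, hst⟩ := hl2.exists_union_eq hA hB hC hAB hBC hAC
  have hsD : s ∈ D := hACD ⟨Or.inl hsA, hsB⟩
  have htD : t ∈ D := hACD ⟨Or.inr htC, htB⟩
  calc
    A ∪ B ∪ C = R s t := hst
    _ ⊆ D := hm.subset_of_mem hD hsD htD

end

theorem stmt_15_general (R : V → V → Set V)
    (hm : IsMonotone R) (hw : AxW R) (hl2 : AxL2 R) :
    WeakHierarchy (transitSets R) ∧ AxL2'Set (transitSets R) ∧
      AxL2''Set (transitSets R) :=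
  ⟨weakHierarchy_transitSets hm hw, axL2'Set_transitSets hl2, axL2''Set_transitSets hm hl2⟩

/-- If a monotone transit function satisfies (w) and (l2), then
𝒞_R is a weak hierarchy satisfying (L2') and (L2''). -/
theorem stmt_15 {V : Type*} [Fintype V] [Nonempty V] (R : V → V → Set V)
    (htf : IsTransit R) (hm : IsMonotone R) (hw : AxW R) (hl2 : AxL2 R) :
    WeakHierarchy (transitSets R) ∧ AxL2'Set (transitSets R) ∧
      AxL2''Set (transitSets R) := by
  exact stmt_15_general R hm hw hl2

end TransitPaper
end

section
/- Let R be a monotone transit function on a finite nonempty set V satisfying axiom (uc). Then R satisfies axiom (l2). -/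
/-!
Write `A = R x y`, `B = R p q`, `C = R u v`. By (uc) the sets `A ∪ B`, `B ∪ C` and `A ∪ B ∪ C` are
transit sets, and by monotonicity transit sets are convex, that is, closed under `R`. If
`A ∪ B ∪ C = R s t`, then `s` and `t` cannot both lie in `A ∪ B`, since convexity would give
`C ⊆ A ∪ B`, contrary to `A ∩ C = ∅` and `C ⊈ B`; likewise they do not both lie in `B ∪ C`. Hence
one endpoint lies only in `A` and the other only in `C`.
-/

namespace TransitPaper

variable {V : Type*}

/-- A set is convex with respect to `R` if it contains the transit set of any two of its points. -/
def IsConvex (R : V → V → Set V) (S : Set V) : Prop :=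
  ∀ ⦃s⦄, s ∈ S → ∀ ⦃t⦄, t ∈ S → R s t ⊆ S

section

variable {R : V → V → Set V} {S T : Set V} {s t x y p q u v : V}

theorem IsMonotone.isConvex (hm : IsMonotone R) (u v : V) : IsConvex R (R u v) :=
  fun s hs t ht => hm u v s t hs ht

theorem IsConvex.mem_sdiff_of_not_subset (hS : IsConvex R S) (hT : IsConvex R T)
    (hs : s ∈ S ∪ T) (ht : t ∈ S ∪ T) (hRS : ¬ R s t ⊆ S) (hRT : ¬ R s t ⊆ T) :
    s ∈ S \ T ∧ t ∈ T \ S ∨ s ∈ T \ S ∧ t ∈ S \ T := by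
  have not_both_S : s ∈ S → t ∉ S := fun hsS htS => hRS (hS hsS htS)
  have not_both_T : s ∈ T → t ∉ T := fun hsT htT => hRT (hT hsT htT)
  rcases hs with hsS | hsT
  · have htT : t ∈ T := ht.resolve_left (not_both_S hsS)
    exact .inl ⟨⟨hsS, fun hsT => not_both_T hsT htT⟩, htT, not_both_S hsS⟩
  · have htS : t ∈ S := ht.resolve_right (not_both_T hsT)
    exact .inr ⟨⟨hsT, fun hsS => not_both_S hsS htS⟩, htS, not_both_T hsT⟩

theorem AxUC.isConvex_union (huc : AxUC R) (hm : IsMonotone R)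
    (h : (R x y ∩ R u v).Nonempty) : IsConvex R (R x y ∪ R u v) := by
  obtain ⟨p, -, q, -, hpq⟩ := huc x y u v h
  exact hpq ▸ hm.isConvex p q

theorem AxUC.exists_union_union_eq (huc : AxUC R) (hAB : (R x y ∩ R p q).Nonempty)
    (hBC : (R p q ∩ R u v).Nonempty) :
    ∃ s ∈ R x y ∪ R p q ∪ R u v, ∃ t ∈ R x y ∪ R p q ∪ R u v,
      R x y ∪ R p q ∪ R u v = R s t := by
  obtain ⟨a, -, b, -, hab⟩ := huc x y p q hAB
  rw [hab]
  refine huc a b u v (hBC.mono (Set.inter_subset_inter_left _ ?_))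
  exact hab ▸ Set.subset_union_right

theorem AxUC.exists_sdiff_union_union_eq (huc : AxUC R) (hm : IsMonotone R)
    (hsymm : ∀ u v, R u v = R v u)
    (hAB : (R x y ∩ R p q).Nonempty) (hBC : (R p q ∩ R u v).Nonempty)
    (hA : ¬ R x y ⊆ R p q ∪ R u v) (hC : ¬ R u v ⊆ R x y ∪ R p q) :
    ∃ s ∈ R x y \ (R p q ∪ R u v), ∃ t ∈ R u v \ (R x y ∪ R p q),
      R x y ∪ R p q ∪ R u v = R s t := by
  obtain ⟨s, hs, t, ht, hst⟩ := huc.exists_union_union_eq hAB hBC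
  have hRAB : ¬ R s t ⊆ R x y ∪ R p q := fun h =>
    hC (Set.subset_union_right.trans (hst.subset.trans h))
  have hRBC : ¬ R s t ⊆ R p q ∪ R u v := fun h =>
    hA (Set.subset_union_left.trans (Set.subset_union_left.trans (hst.subset.trans h)))
  have union_eq : R x y ∪ R p q ∪ R u v = (R x y ∪ R p q) ∪ (R p q ∪ R u v) := by grind
  have sdiff_left : (R x y ∪ R p q) \ (R p q ∪ R u v) = R x y \ (R p q ∪ R u v) := by grind
  have sdiff_right : (R p q ∪ R u v) \ (R x y ∪ R p q) = R u v \ (R x y ∪ R p q) := by grind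
  have endpoints := (huc.isConvex_union hm hAB).mem_sdiff_of_not_subset
    (huc.isConvex_union hm hBC) (union_eq ▸ hs) (union_eq ▸ ht) hRAB hRBC
  rw [sdiff_left, sdiff_right] at endpoints
  rcases endpoints with ⟨hsA, htC⟩ | ⟨hsC, htA⟩
  · exact ⟨s, hsA, t, htC, hst⟩
  · exact ⟨t, htA, s, hsC, hst.trans (hsymm s t)⟩

end

theorem stmt_16_general (R : V → V → Set V) (hsymm : ∀ u v, R u v = R v u)
    (hm : IsMonotone R) (huc : AxUC R) : AxL2 R := by
  rintro x y p q u v ⟨hAB, hA, -⟩ ⟨hBC, -, hC⟩ hAC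
  have hdisj : Disjoint (R x y) (R u v) := Set.disjoint_iff_inter_eq_empty.mpr hAC
  have hA' : ¬ R x y ⊆ R p q ∪ R u v := fun h =>
    Set.sdiff_nonempty.mp hA (hdisj.subset_left_of_subset_union h)
  have hC' : ¬ R u v ⊆ R x y ∪ R p q := fun h =>
    Set.sdiff_nonempty.mp hC (hdisj.symm.subset_right_of_subset_union h)
  obtain ⟨s, ⟨hsA, hs⟩, t, ⟨htC, ht⟩, hst⟩ :=
    huc.exists_sdiff_union_union_eq hm hsymm hAB hBC hA' hC'
  exact ⟨s, ⟨hsA, fun hsB => hs (.inl hsB)⟩, t, ⟨htC, fun htB => ht (.inr htB)⟩, hst⟩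

/-- A monotone transit function satisfying (uc) satisfies (l2). -/
theorem stmt_16 {V : Type*} [Fintype V] [Nonempty V] (R : V → V → Set V)
    (htf : IsTransit R) (hm : IsMonotone R) (huc : AxUC R) :
    AxL2 R :=
  stmt_16_general R htf.2.1 hm huc

end TransitPaper
end

section
/- Every pyramidal transit function R on a finite nonempty set V satisfies axiom (u3). -/
/-!
Any `z ∈ R x y` satisfies `R x z ∪ R z y ⊆ R x y` by monotonicity, so only the reverse inclusion
matters. Let `[[x, y]]` be the segment between `x` and `y` in an order making all transit sets
intervals. If some `z ∈ R x y` lies outside `[[x, y]]`, then `y` lies between `x` and `z` or `x`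
between `z` and `y`, so one of `R x z`, `R z y` contains both `x` and `y`, hence all of `R x y`.
Otherwise `R x y ⊆ [[x, y]]`, and any `z` works: `[[x, z]] ∪ [[z, y]]` covers `[[x, y]]`.
-/

namespace TransitPaper

variable {V : Type*}

section LinearOrder

variable {α : Type*} [LinearOrder α]

open Set Interval

theorem uIcc_subset_union_of_ordConnected {A B : Set α} (hA : A.OrdConnected)
    (hB : B.OrdConnected) {x y z : α} (hxA : x ∈ A) (hzA : z ∈ A) (hzB : z ∈ B) (hyB : y ∈ B) :
    [[x, y]] ⊆ A ∪ B :=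
  uIcc_subset_uIcc_union_uIcc.trans
    (union_subset_union (hA.uIcc_subset hxA hzA) (hB.uIcc_subset hzB hyB))

theorem right_mem_uIcc_or_left_mem_uIcc_of_notMem {x y z : α} (hz : z ∉ [[x, y]]) :
    y ∈ [[x, z]] ∨ x ∈ [[z, y]] := by
  simp only [mem_uIcc] at hz ⊢
  grind

theorem IsIntervalWrt.ordConnected {S : Set α} (hS : IsIntervalWrt (· < ·) S) :
    S.OrdConnected :=
  ordConnected_of_Ioo fun x hx y hy _ w hw => hS x hx y hy w hw.1 hw.2

end LinearOrder

variable {R : V → V → Set V}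

theorem IsPyramidal.exists_linearOrder_ordConnected (hR : IsPyramidal R) :
    ∃ _ : LinearOrder V, ∀ u v, (R u v).OrdConnected := by
  classical
  obtain ⟨-, lt, hlt, hinterval⟩ := hR
  let := linearOrderOfSTO lt
  exact ⟨inferInstance, fun u v => (hinterval u v).ordConnected⟩

theorem IsMonotone.union_subset (hR : IsMonotone R) (left_mem : ∀ u v, u ∈ R u v)
    (right_mem : ∀ u v, v ∈ R u v) {x y z : V} (hz : z ∈ R x y) :
    R x z ∪ R z y ⊆ R x y :=
  Set.union_subset (hR _ _ _ _ (left_mem x y) hz) (hR _ _ _ _ hz (right_mem x y))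

theorem IsMonotone.subset_union_of_mem_or_mem (hR : IsMonotone R)
    (left_mem : ∀ u v, u ∈ R u v) (right_mem : ∀ u v, v ∈ R u v) {x y z : V}
    (h : y ∈ R x z ∨ x ∈ R z y) : R x y ⊆ R x z ∪ R z y := by
  rcases h with hy | hx
  · exact Set.subset_union_of_subset_left (hR _ _ _ _ (left_mem x z) hy) _
  · exact Set.subset_union_of_subset_right (hR _ _ _ _ hx (right_mem z y)) _

theorem stmt_18_general (left_mem : ∀ u v, u ∈ R u v)
    (right_mem : ∀ u v, v ∈ R u v) (hR : IsPyramidal R) : AxU3 R := by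
  obtain ⟨_, hconn⟩ := hR.exists_linearOrder_ordConnected
  intro x y hxy
  suffices ∃ z ∈ R x y, z ∉ ({x, y} : Set V) ∧ R x y ⊆ R x z ∪ R z y by
    obtain ⟨z, hz, hz_ne, hcover⟩ := this
    obtain ⟨hzx, hzy⟩ := not_or.mp hz_ne
    exact ⟨z, hz, hzx, hzy, (hR.1.union_subset left_mem right_mem hz).antisymm hcover⟩
  by_cases hsegment : R x y ⊆ Set.uIcc x y
  · obtain ⟨z, hz, hz_ne⟩ := Set.not_subset.mp hxy
    exact ⟨z, hz, hz_ne, hsegment.trans <| uIcc_subset_union_of_ordConnected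
      (hconn x z) (hconn z y) (left_mem x z) (right_mem x z) (left_mem z y) (right_mem z y)⟩
  · obtain ⟨z, hz, hz_out⟩ := Set.not_subset.mp hsegment
    have hz_ne : z ∉ ({x, y} : Set V) := fun h =>
      hz_out (Set.pair_subset Set.left_mem_uIcc Set.right_mem_uIcc h)
    refine ⟨z, hz, hz_ne, hR.1.subset_union_of_mem_or_mem left_mem right_mem ?_⟩
    exact (right_mem_uIcc_or_left_mem_uIcc_of_notMem hz_out).imp
      (fun hy => (hconn x z).uIcc_subset (left_mem x z) (right_mem x z) hy)
      (fun hx => (hconn z y).uIcc_subset (left_mem z y) (right_mem z y) hx)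

/-- Every pyramidal transit function satisfies (u3). -/
theorem stmt_18 {V : Type*} [Fintype V] [Nonempty V] (R : V → V → Set V)
    (htf : IsTransit R) (hpy : IsPyramidal R) :
    AxU3 R :=
  stmt_18_general htf.1 (fun u v => htf.2.1 v u ▸ htf.1 v u) hpy

end TransitPaper
end

section
/- Let R be a monotone transit function on a finite nonempty set V satisfying axiom (p4). Then R satisfies axiom (wp). -/
/-!
By monotonicity, the case `n = 3` of (p4) applies to a path `s, w, t` with `s, w` in a transit set
`B` and `w, t` in a transit set `C`: if both legs meet a transit set `A ⊈ B ∪ C` and neither `B`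
nor `C` contains the whole path, then `A` contains one of the legs.

Let `A ⊈ B ∪ C`. If `A`, `B`, `C` meet pairwise but have no common point, take `s ∈ A ∩ B`,
`w ∈ B ∩ C` and `t ∈ A ∩ C`; then `w ∈ A`, a contradiction. If they have a common point `z`, while
`b ∈ B` and `c ∈ C` each lie in no other of the three sets, the path `b, z, c` forces `b ∈ A` or
`c ∈ A`, again a contradiction.
-/

namespace TransitPaper

variable {V : Type*}

/-- The case `n = 3` of (p4), with the path `x₁, x₂, x₃` written `a, b, c`. -/
def AxP4Three (R : V → V → Set V) : Prop :=
  ∀ u v y a b c : V, a ∉ R b c → c ∉ R a b →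
    (R u v ∩ R a b).Nonempty → (R u v ∩ R b c).Nonempty →
    y ∈ R u v \ R a b → y ∈ R u v \ R b c → R a b ⊆ R u v ∨ R b c ⊆ R u v

section

variable {R : V → V → Set V}

theorem IsTransit.left_mem (hR : IsTransit R) (u v : V) : u ∈ R u v :=
  hR.1 u v

theorem IsTransit.right_mem (hR : IsTransit R) (u v : V) : v ∈ R u v :=
  hR.2.1 v u ▸ hR.left_mem v u

theorem AxP4.axP4Three (hp4 : AxP4 R) : AxP4Three R := by
  intro u v y a b c ha hc huab hubc hyab hybc
  let x : ℕ → V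
    | 1 => a
    | 2 => b
    | _ => c
  refine hp4 3 le_rfl u v y x (fun i j _ _ _ _ _ _ => ?_) huab hubc (fun i _ _ => ?_)
  · obtain ⟨rfl, rfl⟩ | ⟨rfl, rfl⟩ : (i = 1 ∧ j = 2) ∨ (i = 3 ∧ j = 1) := by omega
    · exact ha
    · exact hc
  · obtain rfl | rfl : i = 1 ∨ i = 2 := by omega
    · exact hyab
    · exact hybc

theorem AxP4Three.subset_or_subset (hp : AxP4Three R) (hm : IsMonotone R) {u v x y p q s w t : V}
    (huv : ¬R u v ⊆ R x y ∪ R p q) (hs : s ∈ R x y \ R p q) (hw : w ∈ R x y ∩ R p q)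
    (ht : t ∈ R p q \ R x y) (hsw : (R u v ∩ R s w).Nonempty) (hwt : (R u v ∩ R w t).Nonempty) :
    R s w ⊆ R u v ∨ R w t ⊆ R u v := by
  obtain ⟨a, ha, ha_union⟩ := Set.not_subset.mp huv
  have hsw_xy : R s w ⊆ R x y := hm x y s w hs.1 hw.1
  have hwt_pq : R w t ⊆ R p q := hm p q w t hw.2 ht.1
  exact hp u v a s w t (fun h => hs.2 (hwt_pq h)) (fun h => ht.2 (hsw_xy h)) hsw hwt
    ⟨ha, fun h => ha_union (.inl (hsw_xy h))⟩ ⟨ha, fun h => ha_union (.inr (hwt_pq h))⟩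

theorem AxP4Three.inter_inter_nonempty (hp : AxP4Three R) (left_mem : ∀ u v, u ∈ R u v)
    (right_mem : ∀ u v, v ∈ R u v) (hm : IsMonotone R) {u v x y p q : V}
    (huv : ¬R u v ⊆ R x y ∪ R p q) (huvxy : (R u v ∩ R x y).Nonempty)
    (huvpq : (R u v ∩ R p q).Nonempty) (hxypq : (R x y ∩ R p q).Nonempty) :
    (R u v ∩ R x y ∩ R p q).Nonempty := by
  by_contra hempty
  have no_common {z : V} (hu : z ∈ R u v) (hx : z ∈ R x y) : z ∉ R p q :=
    fun hz => hempty ⟨z, ⟨hu, hx⟩, hz⟩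
  obtain ⟨s, hsu, hsx⟩ := huvxy
  obtain ⟨t, htu, htp⟩ := huvpq
  obtain ⟨w, hwx, hwp⟩ := hxypq
  have hwu : w ∈ R u v :=
    (hp.subset_or_subset hm huv ⟨hsx, no_common hsu hsx⟩ ⟨hwx, hwp⟩
      ⟨htp, fun htx => no_common htu htx htp⟩ ⟨s, hsu, left_mem s w⟩ ⟨t, htu, right_mem w t⟩).elim
      (fun h => h (right_mem s w)) (fun h => h (left_mem w t))
  exact no_common hwu hwx hwp

theorem AxP4Three.subset_union_of_inter_inter_nonempty (hp : AxP4Three R)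
    (left_mem : ∀ u v, u ∈ R u v) (right_mem : ∀ u v, v ∈ R u v) (hm : IsMonotone R)
    {u v x y p q : V} (hne : (R u v ∩ R x y ∩ R p q).Nonempty) :
    R p q ⊆ R u v ∪ R x y ∨ R u v ⊆ R p q ∪ R x y ∨ R x y ⊆ R p q ∪ R u v := by
  by_contra! ⟨hpq, huv, hxy⟩
  obtain ⟨z, ⟨hzu, hzx⟩, hzp⟩ := hne
  obtain ⟨b, hbx, hb⟩ := Set.not_subset.mp hxy
  obtain ⟨c, hcp, hc⟩ := Set.not_subset.mp hpq
  rw [Set.union_comm] at huv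
  rcases hp.subset_or_subset hm huv ⟨hbx, fun h => hb (.inl h)⟩ ⟨hzx, hzp⟩
    ⟨hcp, fun h => hc (.inr h)⟩ ⟨z, hzu, right_mem b z⟩ ⟨z, hzu, left_mem z c⟩ with hbz | hzc
  · exact hb (.inr (hbz (left_mem b z)))
  · exact hc (.inl (hzc (right_mem z c)))

end

theorem stmt_19_general (R : V → V → Set V) (left_mem : ∀ u v, u ∈ R u v)
    (right_mem : ∀ u v, v ∈ R u v) (hm : IsMonotone R) (hp : AxP4Three R) : AxWP R := by
  intro u v x y p q huvxy huvpq hxypq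
  by_cases huv : R u v ⊆ R x y ∪ R p q
  · exact .inr (.inl (Set.union_comm _ _ ▸ huv))
  · exact hp.subset_union_of_inter_inter_nonempty left_mem right_mem hm
      (hp.inter_inter_nonempty left_mem right_mem hm huv huvxy huvpq hxypq)

/-- A monotone transit function satisfying (p4) satisfies (wp). -/
theorem stmt_19 {V : Type*} [Fintype V] [Nonempty V] (R : V → V → Set V)
    (htf : IsTransit R) (hm : IsMonotone R) (hp4 : AxP4 R) :
    AxWP R :=
  stmt_19_general R htf.left_mem htf.right_mem hm hp4.axP4Three

end TransitPaper
end
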